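/- Assume μ < 0 and c² < −4(k² + b k), and let ν = Γ‴(0) (so ν = −1 in the sphere case Γ = sin and ν = 1 in the hyperbolic case Γ = sinh). Let a₁ > 0 and let s : [a₁,∞) → ℝ be twice differentiable solving the reduced radial equation (4.24): s″(a) + s′(a)/a − μ Γ(s(a)) + V′(s(a))/a² = 0, with sup_{a ≥ a₁} |s(a)| < π in the sphere case and sup_{a ≥ a₁} |s(a)| < ∞ in the hyperbolic case. Then either s is identically zero on [a₁,∞), or there exist constants θ₀ ∈ ℝ and E∞ > 0 and a function Θ : [a₁,∞) → ℝ with Θ(a) = θ₀ − |μ|^{1/2} a − (ν E∞ /(8 |μ|^{1/2})) log a + O(a^{−1}) as a → ∞, such that s(a) = √(2E∞/(a|μ|)) cos Θ(a) + O(a^{−3/2}) and s′(a) = √(2E∞/a) sin Θ(a) + O(a^{−3/2}) as a → ∞. -/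

import Mathlib

open Set Filter Asymptotics

/-- `F(s) = ∫₀ˢ Γ`. -/
noncomputable def Ffun (Γ : ℝ → ℝ) (s : ℝ) : ℝ := ∫ t in (0:ℝ)..s, Γ t

/-- `G(s) = (k²/2) Γ(s)² + b k F(s) − k² F(s)²`. -/
noncomputable def Gfun (k b : ℝ) (Γ : ℝ → ℝ) (s : ℝ) : ℝ :=
  k ^ 2 / 2 * (Γ s) ^ 2 + b * k * Ffun Γ s - k ^ 2 * (Ffun Γ s) ^ 2

/-- Sphere case: `P(s) = (1 − cos s)/(1 + cos s)`. -/
noncomputable def Psph (s : ℝ) : ℝ := (1 - Real.cos s) / (1 + Real.cos s)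

/-- Hyperbolic case: `P(s) = (cosh s − 1)/(cosh s + 1)`. -/
noncomputable def Phyp (s : ℝ) : ℝ := (Real.cosh s - 1) / (Real.cosh s + 1)

/-- `V(s) = G(s) + (c²/2) P(s)`. -/
noncomputable def Vfun (k b c : ℝ) (Γ P : ℝ → ℝ) (s : ℝ) : ℝ :=
  Gfun k b Γ s + c ^ 2 / 2 * P s

/-!
Since `μ < 0`, the equation is a damped oscillator with restoring force `|μ| Γ(s)`, and the
potential `V` contributes only `O(|s| / a²)`. The energy `a (s'² / 2 + |μ| F(s)) + s s' / 2` has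
derivative `O(Q² + Q / a)` with `Q = s² + s'²`, while the quotient of the energy by `a` decreases
at a rate comparable to `Q / a`; together these confine the energy of a nontrivial solution between
two positive constants. Hence `Q = O(1 / a)`, and the energy converges, at rate `1 / a`, to a limit
`E∞ > 0`.

Now replace `Γ(s)` by `s + ν s³ / 6`, with error `O(a^(-5/2))`, and put `z = √a (m s + i s')`,
`m = √|μ|`. Then `z` rotates with angular velocity `-m`, and every term of size `1 / a` in `z'` is
non-resonant (hence integrable by parts) except the one proportional to `i |z|² z / a` coming from
the cubic force. As `|z|² → 2 E∞`, that term shifts the phase by `-(ν E∞ / (8 m)) log a`, and in the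
frame rotating with the corrected phase `z` converges at rate `1 / a`.
-/

open scoped Topology

section Calculus

lemma abs_le_mul_abs_pow_succ_of_abs_deriv_le {f f' : ℝ → ℝ} {M C : ℝ} {n : ℕ} (hC : 0 ≤ C)
    (hf : ∀ x, |x| ≤ M → HasDerivAt f (f' x) x) (hf0 : f 0 = 0)
    (hf' : ∀ x, |x| ≤ M → |f' x| ≤ C * |x| ^ n) {x : ℝ} (hx : |x| ≤ M) :
    |f x| ≤ C * |x| ^ (n + 1) := by
  have hle : ∀ t ∈ Icc (-|x|) |x|, |t| ≤ |x| := fun t ht => abs_le.2 ht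
  have key := (convex_Icc (-|x|) |x|).norm_image_sub_le_of_norm_hasDerivWithin_le
    (C := C * |x| ^ n) (fun t ht => (hf t ((hle t ht).trans hx)).hasDerivWithinAt)
    (fun t ht => (hf' t ((hle t ht).trans hx)).trans
      (mul_le_mul_of_nonneg_left (pow_le_pow_left₀ (abs_nonneg t) (hle t ht) n) hC))
    (by simp : (0 : ℝ) ∈ _) (abs_le.1 le_rfl)
  simpa only [hf0, sub_zero, Real.norm_eq_abs, pow_succ, mul_assoc] using key

lemma nonneg_of_mul_deriv_nonneg {f f' : ℝ → ℝ} {M : ℝ}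
    (hf : ∀ x, |x| ≤ M → HasDerivAt f (f' x) x) (hf0 : f 0 = 0)
    (hf' : ∀ x, |x| ≤ M → 0 ≤ x * f' x) {x : ℝ} (hx : |x| ≤ M) : 0 ≤ f x := by
  have hle : ∀ t ∈ Icc (0 : ℝ) 1, |t * x| ≤ M := fun t ht => by
    rw [abs_mul, abs_of_nonneg ht.1]
    exact (mul_le_of_le_one_left (abs_nonneg x) ht.2).trans hx
  have hd : ∀ t ∈ Icc (0 : ℝ) 1, HasDerivAt (fun t => f (t * x)) (f' (t * x) * x) t :=
    fun t ht => (hf _ (hle t ht)).comp t (hasDerivAt_mul_const x)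
  have hmono : MonotoneOn (fun t => f (t * x)) (Icc 0 1) := by
    refine monotoneOn_of_hasDerivWithinAt_nonneg (convex_Icc 0 1)
      (fun t ht => (hd t ht).continuousAt.continuousWithinAt)
      (fun t ht => (hd t (interior_subset ht)).hasDerivWithinAt) fun t ht => ?_
    have ht' := hf' _ (hle t (interior_subset ht))
    rw [interior_Icc] at ht
    exact nonneg_of_mul_nonneg_right (by linarith : 0 ≤ t * (f' (t * x) * x)) ht.1
  simpa [hf0] using hmono (by simp : (0 : ℝ) ∈ _) (by simp : (1 : ℝ) ∈ _) zero_le_one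

lemma antitoneOn_mul_exp_neg_of_deriv_le_mul {D : Set ℝ} (hD : Convex ℝ D) {f f' g g' : ℝ → ℝ}
    (hf : ∀ x ∈ D, HasDerivAt f (f' x) x) (hg : ∀ x ∈ D, HasDerivAt g (g' x) x)
    (h : ∀ x ∈ D, f' x ≤ g' x * f x) : AntitoneOn (fun x => f x * Real.exp (-g x)) D := by
  have hd : ∀ x ∈ D, HasDerivAt (fun x => f x * Real.exp (-g x))
      ((f' x - g' x * f x) * Real.exp (-g x)) x := fun x hx =>
    ((hf x hx).mul (hg x hx).neg.exp).congr_deriv (by simp only [Pi.neg_apply]; ring)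
  refine antitoneOn_of_hasDerivWithinAt_nonpos hD
    (fun x hx => (hd x hx).continuousAt.continuousWithinAt)
    (fun x hx => (hd x (interior_subset hx)).hasDerivWithinAt) fun x hx => ?_
  exact mul_nonpos_of_nonpos_of_nonneg (sub_nonpos.2 (h x (interior_subset hx)))
    (Real.exp_nonneg _)

lemma mem_Icc_mul_exp_of_abs_deriv_le_mul {D : Set ℝ} (hD : Convex ℝ D) {f f' g g' : ℝ → ℝ}
    (hf : ∀ x ∈ D, HasDerivAt f (f' x) x) (hg : ∀ x ∈ D, HasDerivAt g (g' x) x)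
    (h : ∀ x ∈ D, |f' x| ≤ g' x * f x) {a b : ℝ} (ha : a ∈ D) (hb : b ∈ D) (hab : a ≤ b) :
    f b ∈ Icc (f a * Real.exp (g a - g b)) (f a * Real.exp (g b - g a)) := by
  have hupper := antitoneOn_mul_exp_neg_of_deriv_le_mul hD hf hg
    (fun x hx => (le_abs_self _).trans (h x hx)) ha hb hab
  have hlower := antitoneOn_mul_exp_neg_of_deriv_le_mul hD (fun x hx => (hf x hx).neg)
    (fun x hx => (hg x hx).neg) (fun x hx => by
      simpa using (neg_le_abs _).trans (h x hx)) ha hb hab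
  simp only [Pi.neg_apply, neg_neg, neg_mul, neg_le_neg_iff] at hupper hlower
  constructor
  · rwa [Real.exp_sub, ← mul_div_assoc, div_le_iff₀ (Real.exp_pos _)]
  · rw [Real.exp_neg, ← div_eq_mul_inv, div_le_iff₀ (Real.exp_pos _)] at hupper
    rwa [sub_eq_neg_add, Real.exp_add, ← mul_assoc]

variable {E : Type*} [NormedAddCommGroup E] [NormedSpace ℝ E]

lemma norm_sub_le_sub_of_norm_deriv_le_neg {f f' : ℝ → E} {g g' : ℝ → ℝ} {a b : ℝ} (hab : a ≤ b)
    (hf : ∀ x ∈ Icc a b, HasDerivAt f (f' x) x) (hg : ∀ x ∈ Icc a b, HasDerivAt g (g' x) x)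
    (h : ∀ x ∈ Icc a b, ‖f' x‖ ≤ -g' x) : ‖f b - f a‖ ≤ g a - g b := by
  have hf₀ : ∀ x ∈ Icc a b, HasDerivAt (fun x => f x - f a) (f' x) x :=
    fun x hx => (hf x hx).sub_const _
  have hg₀ : ∀ x ∈ Icc a b, HasDerivAt (fun x => g a - g x) (-g' x) x :=
    fun x hx => (hg x hx).const_sub _
  exact image_norm_le_of_norm_deriv_right_le_deriv_boundary'
    (fun x hx => (hf₀ x hx).continuousAt.continuousWithinAt)
    (fun x hx => (hf₀ x (Ico_subset_Icc_self hx)).hasDerivWithinAt) (by simp)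
    (fun x hx => (hg₀ x hx).continuousAt.continuousWithinAt)
    (fun x hx => (hg₀ x (Ico_subset_Icc_self hx)).hasDerivWithinAt)
    (fun x hx => h x (Ico_subset_Icc_self hx)) (right_mem_Icc.2 hab)

lemma exists_norm_sub_le_of_norm_deriv_le_neg [CompleteSpace E] {f f' : ℝ → E} {g g' : ℝ → ℝ}
    {a₀ : ℝ} (hf : ∀ a ≥ a₀, HasDerivAt f (f' a) a) (hg : ∀ a ≥ a₀, HasDerivAt g (g' a) a)
    (h : ∀ a ≥ a₀, ‖f' a‖ ≤ -g' a) (hg0 : Tendsto g atTop (𝓝 0)) :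
    ∃ L, ∀ a ≥ a₀, ‖f a - L‖ ≤ g a := by
  have hincr : ∀ a ≥ a₀, ∀ b ≥ a, ‖f b - f a‖ ≤ g a - g b := fun a ha b hb =>
    norm_sub_le_sub_of_norm_deriv_le_neg hb (fun x hx => hf x (ha.le.trans hx.1))
      (fun x hx => hg x (ha.le.trans hx.1)) fun x hx => h x (ha.le.trans hx.1)
  have hnonneg : ∀ a ≥ a₀, 0 ≤ g a := fun a ha => le_of_tendsto hg0 (eventually_atTop.2
    ⟨a, fun b hb => sub_nonneg.1 ((norm_nonneg _).trans (hincr a ha b hb))⟩)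
  have hle : ∀ a ≥ a₀, ∀ b ≥ a, ‖f b - f a‖ ≤ g a := fun a ha b hb =>
    (hincr a ha b hb).trans (sub_le_self _ (hnonneg b (ha.le.trans hb)))
  have hcauchy : CauchySeq f := by
    refine Metric.cauchySeq_iff'.2 fun ε hε => ?_
    obtain ⟨N, hN, hNa⟩ := ((hg0.eventually (gt_mem_nhds hε)).and (eventually_ge_atTop a₀)).exists
    exact ⟨N, fun n hn => (dist_eq_norm (f n) (f N)).trans_lt ((hle N hNa n hn).trans_lt hN)⟩
  obtain ⟨L, hL⟩ := cauchySeq_tendsto_of_complete hcauchy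
  refine ⟨L, fun a ha => ?_⟩
  rw [norm_sub_rev]
  exact le_of_tendsto (hL.sub_const (f a)).norm (eventually_atTop.2 ⟨a, hle a ha⟩)

lemma exists_sub_isBigO_inv_of_deriv_isBigO [CompleteSpace E] {f f' : ℝ → E}
    (hf : ∀ᶠ a in atTop, HasDerivAt f (f' a) a)
    (hf' : f' =O[atTop] fun a : ℝ => (a ^ 2)⁻¹) :
    ∃ L, (fun a => f a - L) =O[atTop] fun a : ℝ => a⁻¹ := by
  obtain ⟨C, hC⟩ := hf'.bound
  obtain ⟨a₀, h⟩ := eventually_atTop.1 ((hf.and hC).and (eventually_gt_atTop 0))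
  obtain ⟨L, hL⟩ := exists_norm_sub_le_of_norm_deriv_le_neg (g := fun a => C * a⁻¹)
    (g' := fun a => C * -(a ^ 2)⁻¹) (fun a ha => (h a ha).1.1)
    (fun a ha => (hasDerivAt_inv (h a ha).2.ne').const_mul C)
    (fun a ha => by simpa using (h a ha).1.2) (by simpa using tendsto_inv_atTop_zero.const_mul C)
  refine ⟨L, IsBigO.of_bound C ?_⟩
  filter_upwards [eventually_ge_atTop a₀] with a ha
  simpa only [norm_inv, Real.norm_of_nonneg (h a ha).2.le] using hL a ha

end Calculus

/-- A force `Γ` which on `[-M, M]` agrees with the identity up to a cubic error of size `C` and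
points away from the origin at least as strongly as `δ • id`; such a `Γ` drives the radial
equation `s'' + s' / a + m² Γ(s) + r = 0`. -/
structure IsRestoringForce (M δ C : ℝ) (Γ : ℝ → ℝ) : Prop where
  continuous : Continuous Γ
  delta_pos : 0 < δ
  C_nonneg : 0 ≤ C
  abs_sub_le : ∀ x, |x| ≤ M → |Γ x - x| ≤ C * |x| ^ 3
  mul_sq_le : ∀ x, |x| ≤ M → δ * x ^ 2 ≤ x * Γ x

lemma hasDerivAt_Ffun {Γ : ℝ → ℝ} (hΓ : Continuous Γ) (x : ℝ) :
    HasDerivAt (Ffun Γ) (Γ x) x :=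
  (hΓ.integral_hasStrictDerivAt 0 x).hasDerivAt

lemma Ffun_zero (Γ : ℝ → ℝ) : Ffun Γ 0 = 0 := intervalIntegral.integral_same

namespace IsRestoringForce

variable {M δ C : ℝ} {Γ : ℝ → ℝ} {x : ℝ}

lemma abs_le (hΓ : IsRestoringForce M δ C Γ) (hx : |x| ≤ M) : |Γ x| ≤ (1 + C * M ^ 2) * |x| := by
  have hsq : |x| ^ 2 ≤ M ^ 2 := pow_le_pow_left₀ (abs_nonneg x) hx 2
  calc |Γ x| ≤ |Γ x - x| + |x| := by simpa using abs_add_le (Γ x - x) x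
    _ ≤ C * |x| ^ 3 + |x| := by gcongr; exact hΓ.abs_sub_le x hx
    _ = (1 + C * |x| ^ 2) * |x| := by ring
    _ ≤ (1 + C * M ^ 2) * |x| := by have := hΓ.C_nonneg; gcongr

lemma abs_Ffun_sub_le (hΓ : IsRestoringForce M δ C Γ) (hx : |x| ≤ M) :
    |Ffun Γ x - x ^ 2 / 2| ≤ C * x ^ 4 := by
  have key := abs_le_mul_abs_pow_succ_of_abs_deriv_le (f := fun x => Ffun Γ x - x ^ 2 / 2)
    hΓ.C_nonneg (fun y _ => ((hasDerivAt_Ffun hΓ.continuous y).sub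
      ((hasDerivAt_pow 2 y).div_const 2)).congr_deriv (by simp : _ = Γ y - y))
    (by simp [Ffun_zero]) hΓ.abs_sub_le hx
  rwa [Even.pow_abs (by decide)] at key

lemma abs_Ffun_sub_mul_le (hΓ : IsRestoringForce M δ C Γ) (hx : |x| ≤ M) :
    |Ffun Γ x - x * Γ x / 2| ≤ 2 * C * x ^ 4 := by
  have hmul : |x * (Γ x - x) / 2| ≤ C * x ^ 4 := by
    have h := mul_le_mul_of_nonneg_left (hΓ.abs_sub_le x hx) (abs_nonneg x)
    have h4 : |x| ^ 4 = x ^ 4 := Even.pow_abs (by decide) x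
    have := mul_nonneg hΓ.C_nonneg (pow_nonneg (abs_nonneg x) 4)
    rw [abs_div, abs_mul, abs_two, ← h4]
    linarith
  calc |Ffun Γ x - x * Γ x / 2| = |(Ffun Γ x - x ^ 2 / 2) - x * (Γ x - x) / 2| := by
        congr 1; ring
    _ ≤ |Ffun Γ x - x ^ 2 / 2| + |x * (Γ x - x) / 2| := abs_sub _ _
    _ ≤ C * x ^ 4 + C * x ^ 4 := add_le_add (hΓ.abs_Ffun_sub_le hx) hmul
    _ = 2 * C * x ^ 4 := by ring

lemma mul_sq_le_Ffun (hΓ : IsRestoringForce M δ C Γ) (hx : |x| ≤ M) :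
    δ / 2 * x ^ 2 ≤ Ffun Γ x := by
  refine sub_nonneg.1 (nonneg_of_mul_deriv_nonneg (f := fun x => Ffun Γ x - δ / 2 * x ^ 2)
    (fun y _ => ((hasDerivAt_Ffun hΓ.continuous y).sub
      ((hasDerivAt_pow 2 y).const_mul (δ / 2))).congr_deriv
        (by norm_num; ring : _ = Γ y - δ * y))
    (by simp [Ffun_zero]) (fun y hy => ?_) hx)
  linarith [hΓ.mul_sq_le y hy]

end IsRestoringForce

/-- Estimates along a differentiable energy `E` on `[a₀, ∞)` which controls `a * Q` and for which
the mean energy `E / a` is dissipated at rate at least `c * Q / a`. -/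
structure IsDissipated (c K a₀ : ℝ) (Q E E' : ℝ → ℝ) : Prop where
  c_pos : 0 < c
  K_nonneg : 0 ≤ K
  a₀_pos : 0 < a₀
  hasDerivAt : ∀ a ≥ a₀, HasDerivAt E (E' a) a
  nonneg : ∀ a ≥ a₀, 0 ≤ Q a
  mul_le : ∀ a ≥ a₀, c * (a * Q a) ≤ E a
  deriv_le : ∀ a ≥ a₀, E' a ≤ E a / a - c * Q a
  abs_deriv_le : ∀ a ≥ a₀, |E' a| ≤ K * (Q a * (Q a + a⁻¹))

namespace IsDissipated

variable {c K a₀ : ℝ} {Q E E' : ℝ → ℝ}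

lemma energy_nonneg (h : IsDissipated c K a₀ Q E E') {a : ℝ} (ha : a ≥ a₀) : 0 ≤ E a :=
  (mul_nonneg h.c_pos.le (mul_nonneg (h.a₀_pos.le.trans ha) (h.nonneg a ha))).trans (h.mul_le a ha)

-- The dissipation of the mean energy `E / a` pays for the drift: `|E'| ≤ g' * E` for the function
-- `g = -(K / c²) * (E / a) - (K / c) / a`, which is bounded since it is increasing and nonpositive.
lemma exists_energy_mem_Icc (h : IsDissipated c K a₀ Q E E') (hE : 0 < E a₀) :
    ∃ l > 0, ∃ u, ∀ a ≥ a₀, E a ∈ Icc l u := by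
  have hpos : ∀ a ≥ a₀, 0 < a := fun a ha => h.a₀_pos.trans_le ha
  have hc := h.c_pos
  have hK := h.K_nonneg
  set g : ℝ → ℝ := fun a => -(K / c ^ 2 * (E a / a)) - K / c * a⁻¹
  have hg : ∀ a ∈ Ici a₀, HasDerivAt g
      (-(K / c ^ 2 * ((E' a * a - E a * 1) / a ^ 2)) - K / c * (-(a ^ 2)⁻¹)) a := fun a ha =>
    ((((h.hasDerivAt a ha).div (hasDerivAt_id a) (hpos a ha).ne').const_mul _).neg).sub
      ((hasDerivAt_inv (hpos a ha).ne').const_mul _)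
  have hgE : ∀ a ∈ Ici a₀, |E' a| ≤
      (-(K / c ^ 2 * ((E' a * a - E a * 1) / a ^ 2)) - K / c * (-(a ^ 2)⁻¹)) * E a := by
    intro a ha
    have ha0 := hpos a ha
    have hQ := h.nonneg a ha
    have hW : (E' a * a - E a * 1) / a ^ 2 ≤ -(c * Q a / a) := by
      have := div_le_div_of_nonneg_right (h.deriv_le a ha) ha0.le
      calc (E' a * a - E a * 1) / a ^ 2 = E' a / a - E a / a / a := by field_simp
        _ ≤ -(c * Q a / a) := by linarith [sub_div (E a / a) (c * Q a) a]
    calc |E' a| ≤ K * (Q a * (Q a + a⁻¹)) := h.abs_deriv_le a ha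
      _ = (K / c ^ 2 * (c * Q a / a) + K / c * (a ^ 2)⁻¹) * (c * (a * Q a)) := by field_simp
      _ ≤ (K / c ^ 2 * (c * Q a / a) + K / c * (a ^ 2)⁻¹) * E a := by
        gcongr; exact h.mul_le a ha
      _ ≤ _ := by
        refine mul_le_mul_of_nonneg_right ?_ (h.energy_nonneg ha)
        linarith [mul_le_mul_of_nonneg_left hW (by positivity : 0 ≤ K / c ^ 2)]
  have hg_nonpos : ∀ a ≥ a₀, g a ≤ 0 := fun a ha => by
    have := hpos a ha
    have := h.energy_nonneg ha
    have : 0 ≤ K / c ^ 2 * (E a / a) + K / c * a⁻¹ := by positivity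
    simp only [g]; linarith
  refine ⟨E a₀ * Real.exp (g a₀), by positivity, E a₀ * Real.exp (-g a₀), fun a ha => ?_⟩
  have key := mem_Icc_mul_exp_of_abs_deriv_le_mul (convex_Ici a₀) h.hasDerivAt hg hgE
    self_mem_Ici ha ha
  refine Icc_subset_Icc ?_ ?_ key <;> gcongr <;> linarith [hg_nonpos a ha]

lemma isBigO_inv (h : IsDissipated c K a₀ Q E E') (hE : 0 < E a₀) :
    Q =O[atTop] fun a : ℝ => a⁻¹ := by
  obtain ⟨_, _, u, hu⟩ := h.exists_energy_mem_Icc hE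
  refine IsBigO.of_bound (u / c) ?_
  filter_upwards [eventually_ge_atTop a₀] with a ha
  have ha0 : 0 < a := h.a₀_pos.trans_le ha
  rw [Real.norm_of_nonneg (h.nonneg a ha), Real.norm_of_nonneg (by positivity), div_mul_eq_mul_div,
    le_div_iff₀ h.c_pos, ← div_eq_mul_inv, le_div_iff₀ ha0]
  linarith [h.mul_le a ha, (hu a ha).2]

lemma exists_energy_sub_isBigO (h : IsDissipated c K a₀ Q E E') (hE : 0 < E a₀) :
    ∃ L > 0, (fun a => E a - L) =O[atTop] fun a : ℝ => a⁻¹ := by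
  have hQ := h.isBigO_inv hE
  have hE' : E' =O[atTop] fun a : ℝ => (a ^ 2)⁻¹ := by
    have hdrift : E' =O[atTop] fun a => Q a * (Q a + a⁻¹) := by
      refine IsBigO.of_bound K ?_
      filter_upwards [eventually_ge_atTop a₀] with a ha
      exact (h.abs_deriv_le a ha).trans (mul_le_mul_of_nonneg_left (le_abs_self _) h.K_nonneg)
    refine hdrift.trans ((hQ.mul (hQ.add (isBigO_refl _ _))).congr_right fun a => ?_)
    rw [sq, mul_inv]
  obtain ⟨L, hL⟩ := exists_sub_isBigO_inv_of_deriv_isBigO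
    (eventually_atTop.2 ⟨a₀, h.hasDerivAt⟩) hE'
  refine ⟨L, ?_, hL⟩
  obtain ⟨l, hl, u, hlu⟩ := h.exists_energy_mem_Icc hE
  have hlim : Tendsto E atTop (𝓝 L) :=
    tendsto_sub_nhds_zero_iff.1 (hL.trans_tendsto tendsto_inv_atTop_zero)
  exact hl.trans_le (ge_of_tendsto hlim (eventually_atTop.2 ⟨a₀, fun a ha => (hlu a ha).1⟩))

end IsDissipated

/-- Bounded solutions `s`, with derivative `s'`, of the damped oscillator equation
`s'' + s' / a + m² Γ(s) + r = 0` on `[a₁, ∞)`, where the perturbation `r` is at most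
`K * |s| / a²`. -/
structure IsRadialSolution (m M K a₁ : ℝ) (Γ s s' r : ℝ → ℝ) : Prop where
  m_pos : 0 < m
  K_nonneg : 0 ≤ K
  a₁_pos : 0 < a₁
  hasDerivAt : ∀ a ≥ a₁, HasDerivAt s (s' a) a
  hasDerivAt_deriv : ∀ a ≥ a₁, HasDerivAt s' (-(s' a) / a - m ^ 2 * Γ (s a) - r a) a
  abs_le : ∀ a ≥ a₁, |s a| ≤ M
  abs_perturbation_le : ∀ a ≥ a₁, |r a| ≤ K / a ^ 2 * |s a|

/-- The radial energy: the oscillator energy weighted by `a`, corrected by `s * s' / 2` so that the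
terms of its derivative which do not decay cancel to leading order. -/
noncomputable def radialEnergy (m : ℝ) (Γ s s' : ℝ → ℝ) (a : ℝ) : ℝ :=
  a * (s' a ^ 2 / 2 + m ^ 2 * Ffun Γ (s a)) + s a * s' a / 2

/-- The derivative of `radialEnergy` along a solution of the radial equation with perturbation
`r`, see `IsRadialSolution.hasDerivAt_radialEnergy`. -/
noncomputable def radialEnergyDeriv (m : ℝ) (Γ s s' r : ℝ → ℝ) (a : ℝ) : ℝ :=
  m ^ 2 * (Ffun Γ (s a) - s a * Γ (s a) / 2) - a * (r a * s' a) - s a * s' a / (2 * a) -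
    r a * s a / 2

lemma abs_mul_le_sq_add_sq_div_two (x y : ℝ) : |x * y| ≤ (x ^ 2 + y ^ 2) / 2 := by
  rw [abs_mul, ← sq_abs x, ← sq_abs y]
  linarith [two_mul_le_add_sq |x| |y|]

lemma abs_sub_sub_sub_le (w x y z : ℝ) : |w - x - y - z| ≤ |w| + |x| + |y| + |z| :=
  (abs_sub _ _).trans (add_le_add_left ((abs_sub _ _).trans (add_le_add_left (abs_sub _ _) _)) _)

lemma abs_mul_le_of_abs_le_mul {x y z κ : ℝ} (hκ : 0 ≤ κ) (h : |x| ≤ κ * |y|) :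
    |x * z| ≤ κ * ((y ^ 2 + z ^ 2) / 2) :=
  calc |x * z| ≤ κ * |y| * |z| := by rw [abs_mul]; gcongr
    _ = κ * |y * z| := by rw [abs_mul, mul_assoc]
    _ ≤ κ * ((y ^ 2 + z ^ 2) / 2) := by gcongr; exact abs_mul_le_sq_add_sq_div_two y z

namespace IsRadialSolution

variable {m M K a₁ δ C : ℝ} {Γ s s' r : ℝ → ℝ} {a : ℝ}

lemma pos (hs : IsRadialSolution m M K a₁ Γ s s' r) (ha : a ≥ a₁) : 0 < a := hs.a₁_pos.trans_le ha

lemma abs_deriv_sq_add_sq_le (hΓ : IsRestoringForce M δ C Γ)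
    (hs : IsRadialSolution m M K a₁ Γ s s' r) (ha : a ≥ a₁) :
    |2 * (s a * s' a) - 2 * (s' a ^ 2 / a) - 2 * (m ^ 2 * (Γ (s a) * s' a)) - 2 * (r a * s' a)| ≤
      (1 + 2 * a₁⁻¹ + m ^ 2 * (1 + C * M ^ 2) + K / a₁ ^ 2) * (s a ^ 2 + s' a ^ 2) := by
  have ha0 : 0 < a := hs.pos ha
  have hK := hs.K_nonneg
  have ha₁ := hs.a₁_pos
  have hC := hΓ.C_nonneg
  have hcross := abs_mul_le_sq_add_sq_div_two (s a) (s' a)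
  have hdamping : |s' a ^ 2 / a| ≤ a₁⁻¹ * (s a ^ 2 + s' a ^ 2) := by
    rw [abs_of_nonneg (by positivity), div_eq_inv_mul]
    gcongr
    exact le_add_of_nonneg_left (sq_nonneg _)
  have hforce : |m ^ 2 * (Γ (s a) * s' a)| ≤
      m ^ 2 * ((1 + C * M ^ 2) * ((s a ^ 2 + s' a ^ 2) / 2)) := by
    rw [abs_mul, abs_sq]
    gcongr
    exact abs_mul_le_of_abs_le_mul (by positivity) (hΓ.abs_le (hs.abs_le a ha))
  have hpert : |r a * s' a| ≤ K / a₁ ^ 2 * ((s a ^ 2 + s' a ^ 2) / 2) :=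
    (abs_mul_le_of_abs_le_mul (by positivity) (hs.abs_perturbation_le a ha)).trans (by gcongr)
  refine (abs_sub_sub_sub_le _ _ _ _).trans ?_
  simp only [abs_mul (2 : ℝ), abs_two]
  linarith

lemma sq_add_sq_pos (hΓ : IsRestoringForce M δ C Γ) (hs : IsRadialSolution m M K a₁ Γ s s' r)
    (hne : ∃ a ≥ a₁, s a ≠ 0) (ha : a ≥ a₁) : 0 < s a ^ 2 + s' a ^ 2 := by
  have hd : ∀ b ∈ Ici a₁, HasDerivAt (fun b => s b ^ 2 + s' b ^ 2) (2 * (s b * s' b) -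
      2 * (s' b ^ 2 / b) - 2 * (m ^ 2 * (Γ (s b) * s' b)) - 2 * (r b * s' b)) b := fun b hb =>
    (((hs.hasDerivAt b hb).pow 2).add ((hs.hasDerivAt_deriv b hb).pow 2)).congr_deriv (by ring)
  have hgronwall := fun {x y : ℝ} (hx : x ∈ Ici a₁) (hy : y ∈ Ici a₁) (hxy : x ≤ y) =>
    mem_Icc_mul_exp_of_abs_deriv_le_mul (convex_Ici a₁) hd (fun _ _ => hasDerivAt_const_mul _)
      (fun _ hb => hs.abs_deriv_sq_add_sq_le hΓ hb) hx hy hxy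
  obtain ⟨b, hb, hsb⟩ := hne
  have hQb : 0 < s b ^ 2 + s' b ^ 2 := by positivity
  rcases le_total a b with hab | hba
  · exact pos_of_mul_pos_left (hQb.trans_le (hgronwall ha hb hab).2) (Real.exp_nonneg _)
  · exact lt_of_lt_of_le (by positivity) (hgronwall hb ha hba).1

lemma hasDerivAt_radialEnergy (hΓ : Continuous Γ) (hs : IsRadialSolution m M K a₁ Γ s s' r)
    (ha : a ≥ a₁) : HasDerivAt (radialEnergy m Γ s s') (radialEnergyDeriv m Γ s s' r a) a := by
  have hs₁ := hs.hasDerivAt a ha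
  have hs₂ := hs.hasDerivAt_deriv a ha
  have hF : HasDerivAt (fun b => Ffun Γ (s b)) (Γ (s a) * s' a) a :=
    (hasDerivAt_Ffun hΓ (s a)).comp a hs₁
  refine (((hasDerivAt_id' a).mul (((hs₂.pow 2).div_const 2).add (hF.const_mul (m ^ 2)))).add
    ((hs₁.mul hs₂).div_const 2)).congr_deriv ?_
  have ha0 := (hs.pos ha).ne'
  simp only [radialEnergyDeriv, Nat.cast_ofNat, Pi.add_apply, Pi.pow_apply]
  field_simp
  ring

lemma mul_le_radialEnergy {κ : ℝ} (hκ : κ ≤ 1) (hκ' : κ ≤ m ^ 2 * δ)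
    (hΓ : IsRestoringForce M δ C Γ) (hs : IsRadialSolution m M K a₁ Γ s s' r) (ha : a ≥ a₁) :
    (κ / 2 * a - 1 / 4) * (s a ^ 2 + s' a ^ 2) ≤ radialEnergy m Γ s s' a := by
  have hcross := (_root_.abs_le.1 (abs_mul_le_sq_add_sq_div_two (s a) (s' a))).1
  have hF := mul_le_mul_of_nonneg_left (hΓ.mul_sq_le_Ffun (hs.abs_le a ha)) (sq_nonneg m)
  have hosc : κ / 2 * (s a ^ 2 + s' a ^ 2) ≤ s' a ^ 2 / 2 + m ^ 2 * Ffun Γ (s a) := by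
    linarith [mul_le_mul_of_nonneg_right hκ (sq_nonneg (s' a)),
      mul_le_mul_of_nonneg_right hκ' (sq_nonneg (s a))]
  rw [radialEnergy]
  linarith [mul_le_mul_of_nonneg_left hosc (hs.pos ha).le]

lemma abs_perturbation_mul_le (hs : IsRadialSolution m M K a₁ Γ s s' r) (ha : a ≥ a₁)
    (ha1 : 1 ≤ a) :
    |a * (r a * s' a)| ≤ K * ((s a ^ 2 + s' a ^ 2) / a) / 2 ∧
      |r a * s a| ≤ K * ((s a ^ 2 + s' a ^ 2) / a) := by
  have ha0 : 0 < a := hs.pos ha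
  have hK := hs.K_nonneg
  have hr := hs.abs_perturbation_le a ha
  constructor
  · rw [abs_mul, abs_of_pos ha0]
    calc a * |r a * s' a| ≤ a * (K / a ^ 2 * ((s a ^ 2 + s' a ^ 2) / 2)) := by
          gcongr; exact abs_mul_le_of_abs_le_mul (by positivity) hr
      _ = K * ((s a ^ 2 + s' a ^ 2) / a) / 2 := by field_simp
  · calc |r a * s a| ≤ K / a ^ 2 * ((s a ^ 2 + s a ^ 2) / 2) :=
          abs_mul_le_of_abs_le_mul (by positivity) hr
      _ ≤ K / a * (s a ^ 2 + s' a ^ 2) := by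
        gcongr
        exacts [le_self_pow₀ ha1 two_ne_zero, by linarith [sq_nonneg (s' a)]]
      _ = K * ((s a ^ 2 + s' a ^ 2) / a) := by ring

lemma radialEnergyDeriv_le {κ : ℝ} (hκ : κ ≤ 1) (hκ' : κ ≤ m ^ 2 * δ)
    (hΓ : IsRestoringForce M δ C Γ) (hs : IsRadialSolution m M K a₁ Γ s s' r) (ha : a ≥ a₁)
    (ha1 : 1 ≤ a) :
    radialEnergyDeriv m Γ s s' r a ≤ radialEnergy m Γ s s' a / a -
      κ / 2 * (s a ^ 2 + s' a ^ 2) + (K + 1) * ((s a ^ 2 + s' a ^ 2) / a) := by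
  have : 0 < a := hs.pos ha
  obtain ⟨hpert, hpert'⟩ := hs.abs_perturbation_mul_le ha ha1
  have hcross : -(s a * s' a / a) ≤ (s a ^ 2 + s' a ^ 2) / a / 2 := by
    rw [← neg_div, div_right_comm]
    gcongr
    exact (neg_le_abs _).trans (abs_mul_le_sq_add_sq_div_two _ _)
  have hosc : κ / 2 * (s a ^ 2 + s' a ^ 2) ≤ s' a ^ 2 / 2 + m ^ 2 * (s a * Γ (s a)) / 2 := by
    linarith [mul_le_mul_of_nonneg_right hκ (sq_nonneg (s' a)),
      mul_le_mul_of_nonneg_right hκ' (sq_nonneg (s a)),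
      mul_le_mul_of_nonneg_left (hΓ.mul_sq_le (s a) (hs.abs_le a ha)) (sq_nonneg m)]
  have hsplit : radialEnergyDeriv m Γ s s' r a = radialEnergy m Γ s s' a / a -
      (s' a ^ 2 / 2 + m ^ 2 * (s a * Γ (s a)) / 2) - a * (r a * s' a) - s a * s' a / a -
        r a * s a / 2 := by
    rw [radialEnergyDeriv, radialEnergy]
    field_simp
    ring
  have hnn : 0 ≤ (s a ^ 2 + s' a ^ 2) / a := by positivity
  have := neg_le_abs (a * (r a * s' a))
  have := neg_le_abs (r a * s a)
  rw [hsplit]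
  linarith

lemma abs_radialEnergyDeriv_le (hΓ : IsRestoringForce M δ C Γ)
    (hs : IsRadialSolution m M K a₁ Γ s s' r) (ha : a ≥ a₁) (ha1 : 1 ≤ a) :
    |radialEnergyDeriv m Γ s s' r a| ≤ (2 * m ^ 2 * C + K + 1) *
      ((s a ^ 2 + s' a ^ 2) * (s a ^ 2 + s' a ^ 2 + a⁻¹)) := by
  have : 0 < a := hs.pos ha
  have hC := hΓ.C_nonneg
  have hK := hs.K_nonneg
  obtain ⟨hpert, hpert'⟩ := hs.abs_perturbation_mul_le ha ha1
  have hcross : |s a * s' a / (2 * a)| ≤ (s a ^ 2 + s' a ^ 2) / a / 4 := by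
    calc |s a * s' a / (2 * a)| = |s a * s' a| / (2 * a) := by
          rw [abs_div, abs_of_pos (by positivity : 0 < 2 * a)]
      _ ≤ (s a ^ 2 + s' a ^ 2) / 2 / (2 * a) := by
        gcongr; exact abs_mul_le_sq_add_sq_div_two _ _
      _ = (s a ^ 2 + s' a ^ 2) / a / 4 := by field_simp; norm_num
  have hF : |m ^ 2 * (Ffun Γ (s a) - s a * Γ (s a) / 2)| ≤
      2 * m ^ 2 * C * (s a ^ 2 + s' a ^ 2) ^ 2 := by
    rw [abs_mul, abs_sq]
    calc m ^ 2 * |Ffun Γ (s a) - s a * Γ (s a) / 2| ≤ m ^ 2 * (2 * C * s a ^ 4) := by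
          gcongr; exact hΓ.abs_Ffun_sub_mul_le (hs.abs_le a ha)
      _ = 2 * m ^ 2 * C * (s a ^ 2) ^ 2 := by ring
      _ ≤ 2 * m ^ 2 * C * (s a ^ 2 + s' a ^ 2) ^ 2 := by
        gcongr; exact le_add_of_nonneg_right (sq_nonneg _)
  have hnn : 0 ≤ (s a ^ 2 + s' a ^ 2) / a := by positivity
  have hnn' : 0 ≤ (K + 1) * (s a ^ 2 + s' a ^ 2) ^ 2 := by positivity
  have hnn'' : 0 ≤ m ^ 2 * C * ((s a ^ 2 + s' a ^ 2) / a) := by positivity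
  have hexpand : (s a ^ 2 + s' a ^ 2) * (s a ^ 2 + s' a ^ 2 + a⁻¹) =
      (s a ^ 2 + s' a ^ 2) ^ 2 + (s a ^ 2 + s' a ^ 2) / a := by ring
  have habs : |r a * s a / 2| = |r a * s a| / 2 := by rw [abs_div, abs_two]
  refine (abs_sub_sub_sub_le _ _ _ _).trans ?_
  rw [hexpand]
  linarith

lemma exists_isDissipated (hΓ : IsRestoringForce M δ C Γ)
    (hs : IsRadialSolution m M K a₁ Γ s s' r) :
    ∃ c K' a₀, a₁ ≤ a₀ ∧ IsDissipated c K' a₀ (fun a => s a ^ 2 + s' a ^ 2)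
      (radialEnergy m Γ s s') (radialEnergyDeriv m Γ s s' r) := by
  set κ := min 1 (m ^ 2 * δ)
  have hm := hs.m_pos
  have hδ := hΓ.delta_pos
  have hC := hΓ.C_nonneg
  have hK := hs.K_nonneg
  have hκ : 0 < κ := lt_min one_pos (by positivity)
  have hκ₁ : κ ≤ 1 := min_le_left _ _
  have hκ₂ : κ ≤ m ^ 2 * δ := min_le_right _ _
  set a₀ := max a₁ (max 1 (4 * (K + 1) / κ))
  have hlarge : ∀ a ≥ a₀, a ≥ a₁ ∧ 1 ≤ a ∧ 4 * (K + 1) ≤ a * κ := fun a ha => by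
    obtain ⟨h₁, h₂, h₃⟩ := (max_le_iff.trans (and_congr_right' max_le_iff)).1 ha
    exact ⟨h₁, h₂, (div_le_iff₀ hκ).1 h₃⟩
  refine ⟨κ / 4, 2 * m ^ 2 * C + K + 1, a₀, le_max_left _ _, by positivity, by positivity,
    lt_max_of_lt_left hs.a₁_pos,
    fun a ha => hs.hasDerivAt_radialEnergy hΓ.continuous (hlarge a ha).1, fun a _ => by positivity,
    fun a ha => ?_, fun a ha => ?_,
    fun a ha => hs.abs_radialEnergyDeriv_le hΓ (hlarge a ha).1 (hlarge a ha).2.1⟩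
  · refine le_trans ?_ (hs.mul_le_radialEnergy hκ₁ hκ₂ hΓ (hlarge a ha).1)
    rw [← mul_assoc]
    gcongr
    linarith [(hlarge a ha).2.2]
  · refine (hs.radialEnergyDeriv_le hκ₁ hκ₂ hΓ (hlarge a ha).1 (hlarge a ha).2.1).trans ?_
    have hQ : (K + 1) * ((s a ^ 2 + s' a ^ 2) / a) ≤ κ / 4 * (s a ^ 2 + s' a ^ 2) := by
      rw [← mul_div_assoc, div_le_iff₀ (hs.pos (hlarge a ha).1), mul_right_comm]
      gcongr
      linarith [(hlarge a ha).2.2]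
    linarith

lemma exists_amplitude (hΓ : IsRestoringForce M δ C Γ) (hs : IsRadialSolution m M K a₁ Γ s s' r)
    (hne : ∃ a ≥ a₁, s a ≠ 0) :
    (fun a => s a ^ 2 + s' a ^ 2) =O[atTop] (fun a : ℝ => a⁻¹) ∧
      ∃ L > 0, (fun a => a * (m ^ 2 * s a ^ 2 + s' a ^ 2) / 2 - L) =O[atTop] fun a : ℝ => a⁻¹ := by
  obtain ⟨c, K', a₀, ha₀, hdiss⟩ := hs.exists_isDissipated hΓ
  have hE : 0 < radialEnergy m Γ s s' a₀ := lt_of_lt_of_le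
    (mul_pos hdiss.c_pos (mul_pos hdiss.a₀_pos (hs.sq_add_sq_pos hΓ hne ha₀)))
    (hdiss.mul_le a₀ le_rfl)
  have hQ := hdiss.isBigO_inv hE
  obtain ⟨L, hL, hEL⟩ := hdiss.exists_energy_sub_isBigO hE
  have hF : (fun a => a * (Ffun Γ (s a) - s a ^ 2 / 2)) =O[atTop] fun a : ℝ => a⁻¹ := by
    have hquartic : (fun a => Ffun Γ (s a) - s a ^ 2 / 2) =O[atTop]
        fun a => (s a ^ 2 + s' a ^ 2) ^ 2 := by
      refine IsBigO.of_bound C ?_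
      filter_upwards [eventually_ge_atTop a₁] with a ha
      calc ‖Ffun Γ (s a) - s a ^ 2 / 2‖ ≤ C * s a ^ 4 := hΓ.abs_Ffun_sub_le (hs.abs_le a ha)
        _ = C * (s a ^ 2) ^ 2 := by ring
        _ ≤ C * ‖(s a ^ 2 + s' a ^ 2) ^ 2‖ := by
          rw [Real.norm_of_nonneg (by positivity)]
          have := hΓ.C_nonneg
          gcongr
          exact le_add_of_nonneg_right (sq_nonneg _)
    refine ((isBigO_refl (fun a : ℝ => a) atTop).mul (hquartic.trans (hQ.pow 2))).congr' .rfl ?_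
    filter_upwards [eventually_ne_atTop 0] with a ha
    field_simp
  have hcross : (fun a => s a * s' a) =O[atTop] fun a : ℝ => a⁻¹ :=
    (IsBigO.of_bound 1 (.of_forall fun a => (abs_mul_le_sq_add_sq_div_two _ _).trans
      (by rw [Real.norm_of_nonneg (by positivity), one_mul]; linarith [sq_nonneg (s a),
        sq_nonneg (s' a)]))).trans hQ
  refine ⟨hQ, L, hL, ((hEL.sub (hF.const_mul_left (m ^ 2))).sub
    (hcross.const_mul_left (1 / 2))).congr_left fun a => ?_⟩
  rw [radialEnergy]
  ring

end IsRadialSolution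

section PhasePlane

open Complex (I exp)
open scoped ComplexConjugate

/-- Bounded functions whose derivative at infinity is `O(1 / a)`: the admissible amplitudes of an
oscillation. -/
def IsSlowlyVarying (h : ℝ → ℂ) : Prop :=
  ∃ h' : ℝ → ℂ, (∀ᶠ a in atTop, HasDerivAt h (h' a) a) ∧ h =O[atTop] (fun _ => (1 : ℝ)) ∧
    h' =O[atTop] fun a : ℝ => a⁻¹

/-- Functions with a primitive of size `O(1 / a)`, up to an error `O(1 / a²)` in the derivative:
they are integrable at infinity by cancellation. -/
def HasSmallPrimitive (f : ℝ → ℂ) : Prop :=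
  ∃ A A' : ℝ → ℂ, (∀ᶠ a in atTop, HasDerivAt A (A' a) a) ∧ A =O[atTop] (fun a : ℝ => a⁻¹) ∧
    (fun a => f a - A' a) =O[atTop] fun a : ℝ => (a ^ 2)⁻¹

namespace IsSlowlyVarying

variable {g h : ℝ → ℂ}

lemma mul (hg : IsSlowlyVarying g) (hh : IsSlowlyVarying h) :
    IsSlowlyVarying fun a => g a * h a := by
  obtain ⟨g', hg', hg_bdd, hg'_small⟩ := hg
  obtain ⟨h', hh', hh_bdd, hh'_small⟩ := hh
  refine ⟨_, hg'.mp (hh'.mono fun a h₁ h₂ => h₂.mul h₁), ?_, ?_⟩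
  · simpa using hg_bdd.mul hh_bdd
  · simpa using (hg'_small.mul hh_bdd).add ((hg_bdd.mul hh'_small).congr_right fun a => by ring)

lemma star (hh : IsSlowlyVarying h) : IsSlowlyVarying fun a => conj (h a) := by
  obtain ⟨h', hh', hh_bdd, hh'_small⟩ := hh
  exact ⟨_, hh'.mono fun a ha => ha.star, (isBigO_of_le _ fun a => (norm_star _).le).trans hh_bdd,
    (isBigO_of_le _ fun a => (norm_star _).le).trans hh'_small⟩

end IsSlowlyVarying

namespace HasSmallPrimitive

variable {f g : ℝ → ℂ}

lemma add (hf : HasSmallPrimitive f) (hg : HasSmallPrimitive g) :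
    HasSmallPrimitive fun a => f a + g a := by
  obtain ⟨A, A', hA, hA_small, hfA⟩ := hf
  obtain ⟨B, B', hB, hB_small, hgB⟩ := hg
  exact ⟨_, _, hA.mp (hB.mono fun a h₁ h₂ => h₂.add h₁), hA_small.add hB_small,
    (hfA.add hgB).congr_left fun a => by ring⟩

lemma const_mul (hf : HasSmallPrimitive f) (z : ℂ) : HasSmallPrimitive fun a => z * f a := by
  obtain ⟨A, A', hA, hA_small, hfA⟩ := hf
  exact ⟨_, _, hA.mono fun a ha => ha.const_mul z, hA_small.const_mul_left z,
    (hfA.const_mul_left z).congr_left fun a => by ring⟩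

lemma of_isBigO (hf : f =O[atTop] fun a : ℝ => (a ^ 2)⁻¹) : HasSmallPrimitive f :=
  ⟨fun _ => 0, fun _ => 0, .of_forall fun _ => hasDerivAt_const _ _, isBigO_zero _ _,
    by simpa using hf⟩

lemma exists_sub_isBigO_inv {v : ℝ → ℂ} (hf : HasSmallPrimitive f)
    (hv : ∀ᶠ a in atTop, HasDerivAt v (f a) a) :
    ∃ L, (fun a => v a - L) =O[atTop] fun a : ℝ => a⁻¹ := by
  obtain ⟨A, A', hA, hA_small, hfA⟩ := hf
  obtain ⟨L, hL⟩ := exists_sub_isBigO_inv_of_deriv_isBigO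
    (hv.mp (hA.mono fun a h₁ h₂ => h₂.sub h₁)) hfA
  exact ⟨L, (hL.add hA_small).congr_left fun a => by simp only [Pi.sub_apply]; ring⟩

end HasSmallPrimitive

lemma isBigO_exp_mul_I_mul (φ : ℝ → ℝ) (h : ℝ → ℂ) :
    (fun a => exp (φ a * I) * h a) =O[atTop] h :=
  IsBigO.of_bound 1 (.of_forall fun a => by
    rw [norm_mul, Complex.norm_exp_ofReal_mul_I])

lemma isBigO_ofReal_inv : (fun a : ℝ => (a : ℂ)⁻¹) =O[atTop] fun a : ℝ => a⁻¹ :=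
  isBigO_of_le _ fun a => by simp

-- Integration by parts against the exponential.
lemma IsSlowlyVarying.hasSmallPrimitive {h : ℝ → ℂ} (hh : IsSlowlyVarying h)
    {φ φ' : ℝ → ℝ} {ω : ℝ} (hω : ω ≠ 0) (hφ : ∀ᶠ a in atTop, HasDerivAt φ (φ' a) a)
    (hφ' : (fun a => φ' a - ω) =O[atTop] fun a : ℝ => a⁻¹) :
    HasSmallPrimitive fun a => exp (φ a * I) * (h a / a) := by
  obtain ⟨h', hh', hh_bdd, hh'_small⟩ := hh
  have hω' : (ω : ℂ) ≠ 0 := by exact_mod_cast hω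
  have hdiv : (fun a : ℝ => h a / a) =O[atTop] fun a : ℝ => a⁻¹ := by
    simpa [div_eq_mul_inv] using hh_bdd.mul isBigO_ofReal_inv
  refine ⟨fun a => (ω * I)⁻¹ * (exp (φ a * I) * (h a / a)), fun a => (ω * I)⁻¹ *
    (exp (φ a * I) * (φ' a * I) * (h a / a) + exp (φ a * I) * ((h' a * a - h a * 1) / a ^ 2)),
    ?_, ((isBigO_exp_mul_I_mul _ _).trans hdiv).const_mul_left _, ?_⟩
  · filter_upwards [hφ, hh', eventually_ne_atTop 0] with a hφa hha ha
    exact (((hφa.ofReal_comp.mul_const I).cexp).mul (hha.div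
      (hasDerivAt_id' a).ofReal_comp (by exact_mod_cast ha))).const_mul _
  · have hsum : (fun a : ℝ => -(ω : ℂ)⁻¹ * (((φ' a - ω : ℝ) : ℂ) * (h a / a)) -
        (ω * I)⁻¹ * (h' a * (a : ℂ)⁻¹) + (ω * I)⁻¹ * (h a / a * (a : ℂ)⁻¹))
        =O[atTop] fun a : ℝ => (a ^ 2)⁻¹ := by
      simp only [sq, mul_inv]
      exact ((((Complex.isBigO_ofReal_left.2 hφ').mul hdiv).const_mul_left _).sub
        ((hh'_small.mul isBigO_ofReal_inv).const_mul_left _)).add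
          ((hdiv.mul isBigO_ofReal_inv).const_mul_left _)
    refine ((isBigO_exp_mul_I_mul φ _).trans hsum).congr' ?_ .rfl
    filter_upwards [eventually_ne_atTop 0] with a ha
    have ha' : (a : ℂ) ≠ 0 := by exact_mod_cast ha
    push_cast
    field_simp
    ring

/-- Decaying solutions `s`, with derivative `s'`, of the radial equation with force
`m² * (s + ν * s³ / 6)`, up to an error `ρ = O(a ^ (-5/2))`, whose energy converges to `E`. -/
structure IsAsymptoticOscillation (m ν E : ℝ) (s s' ρ : ℝ → ℝ) : Prop where
  m_pos : 0 < m
  hasDerivAt : ∀ᶠ a in atTop, HasDerivAt s (s' a) a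
  hasDerivAt_deriv : ∀ᶠ a in atTop,
    HasDerivAt s' (-(s' a) / a - m ^ 2 * (s a + ν * s a ^ 3 / 6) + ρ a) a
  error_isBigO : (fun a => √a * ρ a) =O[atTop] fun a : ℝ => (a ^ 2)⁻¹
  energy_isBigO :
    (fun a => a * (m ^ 2 * s a ^ 2 + s' a ^ 2) / 2 - E) =O[atTop] fun a : ℝ => a⁻¹

/-- The point `√a * (m * s + i * s')` of the rescaled phase plane. -/
noncomputable def phasePoint (m : ℝ) (s s' : ℝ → ℝ) (a : ℝ) : ℂ :=
  √a * (m * s a + s' a * I)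

/-- The phase `m * a + β * log a` accumulated up to radius `a`, where `β = ν * E / (8 * m)` is the
frequency shift produced by the resonant part of the cubic force. -/
noncomputable def accumulatedPhase (m ν E a : ℝ) : ℝ :=
  m * a + ν * E / (8 * m) * Real.log a

lemma hasDerivAt_accumulatedPhase (m ν E : ℝ) {a : ℝ} (ha : a ≠ 0) :
    HasDerivAt (accumulatedPhase m ν E) (m + ν * E / (8 * m) * a⁻¹) a :=
  (hasDerivAt_const_mul m).add ((Real.hasDerivAt_log ha).const_mul _)

/-- The phase point in the frame rotating with `accumulatedPhase`. -/
noncomputable def rotatedPoint (m ν E : ℝ) (s s' : ℝ → ℝ) (a : ℝ) : ℂ :=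
  exp (accumulatedPhase m ν E a * I) * phasePoint m s s' a

/-- The part of the derivative of `rotatedPoint` which is integrable in norm: the equation error
`ρ` and the deviation of the energy from its limit. -/
noncomputable def rotatedError (m ν E : ℝ) (s s' ρ : ℝ → ℝ) (a : ℝ) : ℂ :=
  exp (accumulatedPhase m ν E a * I) * (I * (√a * ρ a : ℝ) - ν * I / (8 * m) *
    ((a * (m ^ 2 * s a ^ 2 + s' a ^ 2) / 2 - E : ℝ) *
      (phasePoint m s s' a + conj (phasePoint m s s' a)) / a))

lemma phasePoint_mul_conj (m : ℝ) (s s' : ℝ → ℝ) {a : ℝ} (ha : 0 ≤ a) :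
    phasePoint m s s' a * conj (phasePoint m s s' a) =
      ((a * (m ^ 2 * s a ^ 2 + s' a ^ 2) : ℝ) : ℂ) := by
  have hsq : ((√a : ℝ) : ℂ) ^ 2 = a := by exact_mod_cast Real.sq_sqrt ha
  simp only [phasePoint, map_mul, map_add, Complex.conj_ofReal, Complex.conj_I]
  push_cast
  linear_combination (m ^ 2 * (s a : ℂ) ^ 2 + (s' a : ℂ) ^ 2) * hsq -
    (√a : ℂ) ^ 2 * s' a ^ 2 * Complex.I_sq

lemma norm_phasePoint_sq (m : ℝ) (s s' : ℝ → ℝ) {a : ℝ} (ha : 0 ≤ a) :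
    ‖phasePoint m s s' a‖ ^ 2 = a * (m ^ 2 * s a ^ 2 + s' a ^ 2) := by
  exact_mod_cast (Complex.mul_conj' _).symm.trans (phasePoint_mul_conj m s s' ha)

lemma rpow_neg_three_halves {a : ℝ} (ha : 0 < a) : a ^ (-(3 : ℝ) / 2) = (√a)⁻¹ * a⁻¹ := by
  rw [Real.sqrt_eq_rpow, ← Real.rpow_neg ha.le, ← Real.rpow_neg_one a, ← Real.rpow_add ha]
  norm_num

namespace IsAsymptoticOscillation

variable {m ν E : ℝ} {s s' ρ : ℝ → ℝ}

lemma hasDerivAt_phasePoint (h : IsAsymptoticOscillation m ν E s s' ρ) :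
    ∀ᶠ a in atTop, HasDerivAt (phasePoint m s s') (-(I * m * phasePoint m s s' a) +
      conj (phasePoint m s s' a) / (2 * a) - I * ν / (6 * m * a) *
        ((phasePoint m s s' a + conj (phasePoint m s s' a)) / 2) ^ 3 + I * (√a * ρ a : ℝ)) a := by
  filter_upwards [h.hasDerivAt, h.hasDerivAt_deriv, eventually_gt_atTop 0] with a hs hs' ha
  have hsqrt := (Real.hasDerivAt_sqrt ha.ne').ofReal_comp
  refine (hsqrt.mul ((hs.ofReal_comp.const_mul (m : ℂ)).add
    (hs'.ofReal_comp.mul_const I))).congr_deriv ?_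
  have hm : (m : ℂ) ≠ 0 := by exact_mod_cast h.m_pos.ne'
  have hsq : ((√a : ℝ) : ℂ) ^ 2 = a := by exact_mod_cast Real.sq_sqrt ha.le
  have hsqrt0 : ((√a : ℝ) : ℂ) ≠ 0 := by exact_mod_cast (Real.sqrt_pos.2 ha).ne'
  simp only [phasePoint, map_mul, map_add, Complex.conj_ofReal, Complex.conj_I, ← hsq,
    Pi.add_apply]
  push_cast
  simp only [← hsq]
  field_simp
  linear_combination 48 * (m : ℂ) ^ 2 * (√a : ℂ) ^ 2 * s' a * Complex.I_sq

lemma hasDerivAt_rotatedPoint (h : IsAsymptoticOscillation m ν E s s' ρ) :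
    ∀ᶠ a in atTop, HasDerivAt (rotatedPoint m ν E s s')
      ((1 / 2 - ν * E / (8 * m) * I) * (exp ((2 * accumulatedPhase m ν E a : ℝ) * I) *
          (conj (rotatedPoint m ν E s s' a) / a)) +
        -(ν * I / (48 * m)) * (exp ((-2 * accumulatedPhase m ν E a : ℝ) * I) *
          (rotatedPoint m ν E s s' a ^ 3 / a)) +
        -(ν * I / (48 * m)) * (exp ((4 * accumulatedPhase m ν E a : ℝ) * I) *
          (conj (rotatedPoint m ν E s s' a) ^ 3 / a)) +
        rotatedError m ν E s s' ρ a) a := by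
  filter_upwards [h.hasDerivAt_phasePoint, eventually_gt_atTop 0] with a hz ha
  refine (((hasDerivAt_accumulatedPhase m ν E ha.ne').ofReal_comp.mul_const I).cexp.mul
    hz).congr_deriv ?_
  have hη : ((a * (m ^ 2 * s a ^ 2 + s' a ^ 2) / 2 - E : ℝ) : ℂ) =
      phasePoint m s s' a * conj (phasePoint m s s' a) / 2 - E := by
    rw [phasePoint_mul_conj m s s' ha.le]
    push_cast
    ring
  rw [rotatedError, hη, rotatedPoint, map_mul]
  set θ := accumulatedPhase m ν E a
  have h₂ : exp ((2 * θ : ℝ) * I) * conj (exp (θ * I)) = exp (θ * I) := by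
    rw [← Complex.exp_conj, ← Complex.exp_add]
    simp only [map_mul, Complex.conj_ofReal, Complex.conj_I]
    push_cast
    ring_nf
  have h₃ : exp ((-2 * θ : ℝ) * I) * exp (θ * I) ^ 3 = exp (θ * I) := by
    rw [← Complex.exp_nat_mul, ← Complex.exp_add]
    push_cast
    ring_nf
  have h₄ : exp ((4 * θ : ℝ) * I) * conj (exp (θ * I)) ^ 3 = exp (θ * I) := by
    rw [← Complex.exp_conj, ← Complex.exp_nat_mul, ← Complex.exp_add]
    simp only [map_mul, Complex.conj_ofReal, Complex.conj_I]
    push_cast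
    ring_nf
  set z := phasePoint m s s' a
  push_cast at h₂ h₃ h₄ ⊢
  linear_combination -((1 / 2 - ν * E / (8 * m) * I) * conj z / a) * h₂ +
    ν * I / (48 * m) * (z ^ 3 / a) * h₃ + ν * I / (48 * m) * (conj z ^ 3 / a) * h₄

lemma phasePoint_isBigO_one (h : IsAsymptoticOscillation m ν E s s' ρ) :
    phasePoint m s s' =O[atTop] fun _ => (1 : ℝ) := by
  have hsq : (fun a => ‖phasePoint m s s' a‖ ^ 2) =O[atTop] fun _ => (1 : ℝ) := by
    have hbdd := ((h.energy_isBigO.trans (tendsto_inv_atTop_zero.isBigO_one ℝ)).add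
      (isBigO_const_const E one_ne_zero atTop)).const_mul_left 2
    refine hbdd.congr' ?_ .rfl
    filter_upwards [eventually_ge_atTop 0] with a ha
    rw [norm_phasePoint_sq m s s' ha]
    ring
  refine (IsBigO.of_pow (n := 2) two_ne_zero (g := fun _ => (1 : ℝ)) ?_).of_norm_left
  simpa only [Pi.pow_def, one_pow] using hsq

lemma rotatedPoint_isBigO_one (h : IsAsymptoticOscillation m ν E s s' ρ) :
    rotatedPoint m ν E s s' =O[atTop] fun _ => (1 : ℝ) :=
  (isBigO_exp_mul_I_mul _ _).trans h.phasePoint_isBigO_one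

lemma rotatedError_isBigO (h : IsAsymptoticOscillation m ν E s s' ρ) :
    rotatedError m ν E s s' ρ =O[atTop] fun a : ℝ => (a ^ 2)⁻¹ := by
  have hz := h.phasePoint_isBigO_one
  have hzconj : (fun a => conj (phasePoint m s s' a)) =O[atTop] fun _ => (1 : ℝ) :=
    (isBigO_of_le _ fun a => (norm_star _).le).trans hz
  have hη := ((Complex.isBigO_ofReal_left.2 h.energy_isBigO).mul (hz.add hzconj)).mul
    isBigO_ofReal_inv
  refine (isBigO_exp_mul_I_mul _ _).trans
    (((Complex.isBigO_ofReal_left.2 h.error_isBigO).const_mul_left I).sub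
      (IsBigO.const_mul_left ?_ _))
  simpa [div_eq_mul_inv, sq] using hη

lemma isSlowlyVarying_rotatedPoint (h : IsAsymptoticOscillation m ν E s s' ρ) :
    IsSlowlyVarying (rotatedPoint m ν E s s') := by
  have hv := h.rotatedPoint_isBigO_one
  have hvconj : (fun a => conj (rotatedPoint m ν E s s' a)) =O[atTop] fun _ => (1 : ℝ) :=
    (isBigO_of_le _ fun a => (norm_star _).le).trans hv
  have hterm : ∀ (φ : ℝ → ℝ) {f : ℝ → ℂ}, f =O[atTop] (fun _ => (1 : ℝ)) →
      (fun a : ℝ => exp (φ a * I) * (f a / a)) =O[atTop] fun a : ℝ => a⁻¹ := fun φ f hf =>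
    (isBigO_exp_mul_I_mul φ _).trans (by simpa [div_eq_mul_inv] using hf.mul isBigO_ofReal_inv)
  have herror : rotatedError m ν E s s' ρ =O[atTop] fun a : ℝ => a⁻¹ := by
    refine h.rotatedError_isBigO.trans ?_
    simpa [sq, mul_inv] using (isBigO_refl (fun a : ℝ => a⁻¹) atTop).mul
      (tendsto_inv_atTop_zero.isBigO_one ℝ)
  exact ⟨_, h.hasDerivAt_rotatedPoint, hv,
    ((((hterm _ hvconj).const_mul_left _).add
      ((hterm _ (by simpa using hv.pow 3)).const_mul_left _)).add
      ((hterm _ (by simpa using hvconj.pow 3)).const_mul_left _)).add herror⟩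

lemma exists_rotatedPoint_sub_isBigO (h : IsAsymptoticOscillation m ν E s s' ρ) :
    ∃ L, (fun a => rotatedPoint m ν E s s' a - L) =O[atTop] fun a : ℝ => a⁻¹ := by
  have hv := h.isSlowlyVarying_rotatedPoint
  have hosc : ∀ {n : ℝ} {f : ℝ → ℂ}, n ≠ 0 → IsSlowlyVarying f → HasSmallPrimitive fun a : ℝ =>
      exp ((n * accumulatedPhase m ν E a : ℝ) * I) * (f a / a) := fun {n f} hn hf =>
    hf.hasSmallPrimitive (mul_ne_zero hn h.m_pos.ne')
      ((eventually_ne_atTop 0).mono fun a ha =>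
        (hasDerivAt_accumulatedPhase m ν E ha).const_mul n)
      (((isBigO_refl (fun a : ℝ => a⁻¹) atTop).const_mul_left (n * (ν * E / (8 * m)))).congr_left
        fun a => by ring)
  have hcube : ∀ {f : ℝ → ℂ}, IsSlowlyVarying f → IsSlowlyVarying fun a => f a ^ 3 := fun hf => by
    simpa only [pow_succ, pow_zero, one_mul] using (hf.mul hf).mul hf
  exact (((((hosc two_ne_zero hv.star).const_mul _).add
    ((hosc (by norm_num) (hcube hv)).const_mul _)).add
    ((hosc (by norm_num) (hcube hv.star)).const_mul _)).add
    (.of_isBigO h.rotatedError_isBigO)).exists_sub_isBigO_inv h.hasDerivAt_rotatedPoint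

lemma exists_phasePoint_sub_isBigO (h : IsAsymptoticOscillation m ν E s s' ρ) :
    ∃ θ₀ : ℝ, (fun a => phasePoint m s s' a -
      √(2 * E) * exp ((θ₀ - accumulatedPhase m ν E a : ℝ) * I)) =O[atTop] fun a : ℝ => a⁻¹ := by
  obtain ⟨L, hL⟩ := h.exists_rotatedPoint_sub_isBigO
  have hnormL : ‖L‖ = √(2 * E) := by
    have hv : Tendsto (rotatedPoint m ν E s s') atTop (𝓝 L) :=
      tendsto_sub_nhds_zero_iff.1 (hL.trans_tendsto tendsto_inv_atTop_zero)
    have henergy : Tendsto (fun a => a * (m ^ 2 * s a ^ 2 + s' a ^ 2) / 2) atTop (𝓝 E) :=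
      tendsto_sub_nhds_zero_iff.1 (h.energy_isBigO.trans_tendsto tendsto_inv_atTop_zero)
    have hsq : ‖L‖ ^ 2 = 2 * E := by
      refine tendsto_nhds_unique (hv.norm.pow 2) ((henergy.const_mul 2).congr' ?_)
      filter_upwards [eventually_ge_atTop 0] with a ha
      rw [rotatedPoint, norm_mul, Complex.norm_exp_ofReal_mul_I, one_mul,
        norm_phasePoint_sq m s s' ha]
      ring
    rw [← hsq, Real.sqrt_sq (norm_nonneg L)]
  refine ⟨L.arg, ((isBigO_exp_mul_I_mul (fun a => -accumulatedPhase m ν E a) _).trans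
    hL).congr_left fun a => ?_⟩
  have hrot : exp ((-accumulatedPhase m ν E a : ℝ) * I) *
      exp (accumulatedPhase m ν E a * I) = 1 := by
    rw [← Complex.exp_add]
    simp
  have hsplit : exp ((L.arg - accumulatedPhase m ν E a : ℝ) * I) =
      exp (L.arg * I) * exp ((-accumulatedPhase m ν E a : ℝ) * I) := by
    rw [← Complex.exp_add]
    push_cast
    ring_nf
  rw [rotatedPoint, hsplit, ← hnormL]
  linear_combination phasePoint m s s' a * hrot +
    exp ((-accumulatedPhase m ν E a : ℝ) * I) * L.norm_mul_exp_arg_mul_I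

theorem exists_asymptotics (h : IsAsymptoticOscillation m ν E s s' ρ) :
    ∃ θ₀ : ℝ,
      (fun a => s a - √(2 * E / (a * m ^ 2)) * Real.cos (θ₀ - accumulatedPhase m ν E a))
        =O[atTop] (fun a : ℝ => a ^ (-(3 : ℝ) / 2)) ∧
      (fun a => s' a - √(2 * E / a) * Real.sin (θ₀ - accumulatedPhase m ν E a))
        =O[atTop] (fun a : ℝ => a ^ (-(3 : ℝ) / 2)) := by
  obtain ⟨θ₀, hθ₀⟩ := h.exists_phasePoint_sub_isBigO
  have hrescale : ∀ {f : ℝ → ℝ}, f =O[atTop] (fun a : ℝ => a⁻¹) →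
      (fun a => (√a)⁻¹ * f a) =O[atTop] fun a : ℝ => a ^ (-(3 : ℝ) / 2) := fun hf =>
    ((isBigO_refl _ _).mul hf).congr' .rfl
      ((eventually_gt_atTop 0).mono fun a ha => (rpow_neg_three_halves ha).symm)
  have hre := hrescale ((isBigO_of_le _ fun a => Complex.abs_re_le_norm _).trans hθ₀)
  have him := hrescale ((isBigO_of_le _ fun a => Complex.abs_im_le_norm _).trans hθ₀)
  have hm := h.m_pos
  refine ⟨θ₀, (hre.const_mul_left m⁻¹).congr' ?_ .rfl, him.congr' ?_ .rfl⟩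
  · filter_upwards [eventually_gt_atTop 0] with a ha
    have := Real.sqrt_pos.2 ha
    rw [Real.sqrt_div' _ (by positivity), Real.sqrt_mul ha.le, Real.sqrt_sq hm.le]
    simp only [phasePoint, Complex.sub_re, Complex.add_re, Complex.re_ofReal_mul,
      Complex.ofReal_re, Complex.I_re, mul_zero, add_zero, Complex.exp_ofReal_mul_I_re]
    field_simp
  · filter_upwards [eventually_gt_atTop 0] with a ha
    have := Real.sqrt_pos.2 ha
    rw [Real.sqrt_div' _ ha.le]
    simp only [phasePoint, Complex.sub_im, Complex.add_im, Complex.im_ofReal_mul,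
      Complex.ofReal_im, Complex.I_im, mul_zero, mul_one, zero_add, Complex.exp_ofReal_mul_I_im]
    field_simp

end IsAsymptoticOscillation

end PhasePlane

lemma IsRadialSolution.exists_isAsymptoticOscillation {m M K a₁ δ C C' ν : ℝ}
    {Γ s s' r : ℝ → ℝ} (hΓ : IsRestoringForce M δ C Γ)
    (hν : ∀ x, |x| ≤ M → |Γ x - x - ν * x ^ 3 / 6| ≤ C' * |x| ^ 5)
    (hs : IsRadialSolution m M K a₁ Γ s s' r) (hne : ∃ a ≥ a₁, s a ≠ 0) :
    ∃ E > 0, IsAsymptoticOscillation m ν E s s'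
      fun a => -(m ^ 2 * (Γ (s a) - s a - ν * s a ^ 3 / 6)) - r a := by
  obtain ⟨hsq, E, hE, henergy⟩ := hs.exists_amplitude hΓ hne
  refine ⟨E, hE, ⟨hs.m_pos, (eventually_ge_atTop a₁).mono hs.hasDerivAt,
    (eventually_ge_atTop a₁).mono fun a ha => (hs.hasDerivAt_deriv a ha).congr_deriv (by ring),
    ?_, henergy⟩⟩
  have hamp : s =O[atTop] fun a => (√a)⁻¹ := by
    refine IsBigO.of_pow two_ne_zero (((IsBigO.of_bound' (.of_forall fun a => ?_)).trans
      hsq).congr' .rfl ((eventually_ge_atTop 0).mono fun a ha => ?_))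
    · simp only [Pi.pow_apply, Real.norm_eq_abs]
      exact abs_le_abs_of_nonneg (sq_nonneg _) (le_add_of_nonneg_right (sq_nonneg _))
    · simp only [Pi.pow_apply, inv_pow, Real.sq_sqrt ha]
  have hquintic : (fun a => Γ (s a) - s a - ν * s a ^ 3 / 6) =O[atTop]
      fun a : ℝ => (a ^ 2)⁻¹ * (√a)⁻¹ := by
    refine ((IsBigO.of_bound C' ((eventually_ge_atTop a₁).mono fun a ha => ?_)).trans
      (hamp.pow 5)).congr' .rfl ((eventually_ge_atTop 0).mono fun a ha => ?_)
    · simpa using hν (s a) (hs.abs_le a ha)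
    · dsimp only
      nth_rw 2 [← Real.sq_sqrt ha]
      ring
  have hperturbation : r =O[atTop] fun a : ℝ => (a ^ 2)⁻¹ * (√a)⁻¹ := by
    refine (IsBigO.of_bound K ((eventually_ge_atTop a₁).mono fun a ha => ?_)).trans
      ((isBigO_refl (fun a : ℝ => (a ^ 2)⁻¹) atTop).mul hamp)
    simpa [div_eq_mul_inv, mul_assoc] using hs.abs_perturbation_le a ha
  refine ((isBigO_refl (fun a : ℝ => √a) atTop).mul
    ((hquintic.const_mul_left (m ^ 2)).neg_left.sub hperturbation)).congr' .rfl ?_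
  filter_upwards [eventually_gt_atTop 0] with a ha
  have := Real.sqrt_pos.2 ha
  field_simp

lemma isRadialSolution_of_deriv_deriv_eq {μ M K a₁ : ℝ} {Γ W s : ℝ → ℝ} (hμ : μ < 0)
    (hK : 0 ≤ K) (ha₁ : 0 < a₁)
    (hdiff : ∀ a ∈ Ici a₁, DifferentiableAt ℝ s a ∧ DifferentiableAt ℝ (deriv s) a)
    (hode : ∀ a ∈ Ici a₁,
      deriv (deriv s) a + deriv s a / a - μ * Γ (s a) + W (s a) / a ^ 2 = 0)
    (hM : ∀ a ∈ Ici a₁, |s a| ≤ M) (hW : ∀ x, |x| ≤ M → |W x| ≤ K * |x|) :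
    IsRadialSolution √|μ| M K a₁ Γ s (deriv s) fun a => W (s a) / a ^ 2 where
  m_pos := Real.sqrt_pos.2 (abs_pos.2 hμ.ne)
  K_nonneg := hK
  a₁_pos := ha₁
  hasDerivAt a ha := (hdiff a ha).1.hasDerivAt
  hasDerivAt_deriv a ha := (hdiff a ha).2.hasDerivAt.congr_deriv (by
    rw [Real.sq_sqrt (abs_nonneg μ), abs_of_neg hμ]
    linear_combination hode a ha)
  abs_le := hM
  abs_perturbation_le a ha := by
    rw [abs_div, abs_sq, div_mul_eq_mul_div]
    exact div_le_div_of_nonneg_right (hW _ (hM a ha)) (sq_nonneg a)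

/-- The profile `Γ` of the metric `ds² + Γ(s)² dθ²` of constant curvature `-ν`, characterised by
`Γ(0) = 0`, `Γ'(0) = 1` and `Γ'' = ν * Γ`, the latter two combined into `Γ' = 1 + ν * F`. -/
structure IsConstCurvProfile (ν : ℝ) (Γ : ℝ → ℝ) : Prop where
  map_zero : Γ 0 = 0
  hasDerivAt : ∀ x, HasDerivAt Γ (1 + ν * Ffun Γ x) x

lemma Ffun_sin (x : ℝ) : Ffun Real.sin x = 1 - Real.cos x := by
  simp [Ffun]

lemma Ffun_sinh (x : ℝ) : Ffun Real.sinh x = Real.cosh x - 1 := by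
  rw [Ffun, intervalIntegral.integral_eq_sub_of_hasDerivAt (fun y _ => Real.hasDerivAt_cosh y)
    (Real.continuous_sinh.intervalIntegrable _ _), Real.cosh_zero]

lemma isConstCurvProfile_sin : IsConstCurvProfile (-1) Real.sin :=
  ⟨Real.sin_zero, fun x => (Real.hasDerivAt_sin x).congr_deriv (by rw [Ffun_sin]; ring)⟩

lemma isConstCurvProfile_sinh : IsConstCurvProfile 1 Real.sinh :=
  ⟨Real.sinh_zero, fun x => (Real.hasDerivAt_sinh x).congr_deriv (by rw [Ffun_sinh]; ring)⟩

lemma Psph_eq_div (x : ℝ) : Psph x = Ffun Real.sin x / (2 + -1 * Ffun Real.sin x) := by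
  rw [Psph, Ffun_sin]
  ring_nf

lemma Phyp_eq_div (x : ℝ) : Phyp x = Ffun Real.sinh x / (2 + 1 * Ffun Real.sinh x) := by
  rw [Phyp, Ffun_sinh]
  ring_nf

lemma mul_sin_pos {x : ℝ} (hx : |x| < Real.pi) (hx0 : x ≠ 0) : 0 < x * Real.sin x := by
  rcases hx0.lt_or_gt with hneg | hpos
  · exact mul_pos_of_neg_of_neg hneg (Real.sin_neg_of_neg_of_neg_pi_lt hneg (abs_lt.1 hx).1)
  · exact mul_pos hpos (Real.sin_pos_of_pos_of_lt_pi hpos (abs_lt.1 hx).2)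

lemma mul_sinh_pos {x : ℝ} (hx0 : x ≠ 0) : 0 < x * Real.sinh x := by
  rcases hx0.lt_or_gt with hneg | hpos
  · exact mul_pos_of_neg_of_neg hneg (Real.sinh_neg_iff.2 hneg)
  · exact mul_pos hpos (Real.sinh_pos_iff.2 hpos)

lemma exists_abs_le_of_continuousAt {f : ℝ → ℝ} {M : ℝ}
    (hf : ∀ x, |x| ≤ M → ContinuousAt f x) : ∃ B, 0 ≤ B ∧ ∀ x, |x| ≤ M → |f x| ≤ B := by
  obtain ⟨B, hB⟩ := isCompact_Icc.exists_bound_of_continuousOn (s := Icc (-M) M)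
    fun x hx => (hf x (abs_le.2 hx)).continuousWithinAt
  exact ⟨|B|, abs_nonneg B, fun x hx => (hB x (abs_le.1 hx)).trans (le_abs_self B)⟩

namespace IsConstCurvProfile

variable {M ν : ℝ} {Γ P : ℝ → ℝ} {x : ℝ}

lemma continuous (hΓ : IsConstCurvProfile ν Γ) : Continuous Γ :=
  continuous_iff_continuousAt.2 fun x => (hΓ.hasDerivAt x).continuousAt

lemma hasDerivAt_Ffun (hΓ : IsConstCurvProfile ν Γ) (x : ℝ) : HasDerivAt (Ffun Γ) (Γ x) x :=
  _root_.hasDerivAt_Ffun hΓ.continuous x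

lemma sq_eq (hΓ : IsConstCurvProfile ν Γ) (x : ℝ) : Γ x ^ 2 = Ffun Γ x * (2 + ν * Ffun Γ x) := by
  have hderiv : ∀ y, HasDerivAt (fun y => Γ y ^ 2 - Ffun Γ y * (2 + ν * Ffun Γ y)) 0 y := fun y =>
    (((hΓ.hasDerivAt y).pow 2).sub ((hΓ.hasDerivAt_Ffun y).mul
      (((hΓ.hasDerivAt_Ffun y).const_mul ν).const_add 2))).congr_deriv (by norm_num; ring)
  have hconst := is_const_of_deriv_eq_zero (fun y => (hderiv y).differentiableAt)
    (fun y => (hderiv y).deriv) x 0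
  simpa [hΓ.map_zero, Ffun_zero, sub_eq_zero] using hconst

lemma exists_mul_sq_le (hΓ : IsConstCurvProfile ν Γ)
    (hpos : ∀ x, |x| ≤ M → x ≠ 0 → 0 < x * Γ x) :
    ∃ δ > 0, ∀ x, |x| ≤ M → δ * x ^ 2 ≤ x * Γ x := by
  have hdslope : ∀ x, x * Γ x = dslope Γ 0 x * x ^ 2 := fun x => by
    have := sub_smul_dslope Γ 0 x
    rw [hΓ.map_zero, sub_zero, sub_zero, smul_eq_mul] at this
    linear_combination -x * this
  have hcont : Continuous (dslope Γ 0) := continuous_iff_continuousAt.2 fun x => by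
    rcases eq_or_ne x 0 with rfl | hx
    · exact continuousAt_dslope_same.2 (hΓ.hasDerivAt 0).differentiableAt
    · exact (continuousAt_dslope_of_ne hx).2 hΓ.continuous.continuousAt
  obtain ⟨δ, hδ, hle⟩ := isCompact_Icc.exists_forall_le' (s := Icc (-M) M) (a := 0)
    hcont.continuousOn fun x hx => by
      rcases eq_or_ne x 0 with rfl | hx0
      · simp [dslope_same, (hΓ.hasDerivAt 0).deriv, Ffun_zero]
      · exact pos_of_mul_pos_left (hdslope x ▸ hpos x (abs_le.2 hx) hx0) (sq_nonneg x)
  refine ⟨δ, hδ, fun x hx => ?_⟩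
  rw [hdslope]
  exact mul_le_mul_of_nonneg_right (hle x (abs_le.1 hx)) (sq_nonneg x)

lemma exists_abs_Ffun_le (hΓ : IsConstCurvProfile ν Γ) (M : ℝ) :
    ∃ B, 0 ≤ B ∧ ∀ x, |x| ≤ M → |Ffun Γ x| ≤ B * |x| ^ 2 := by
  obtain ⟨B, hB, hderiv⟩ := exists_abs_le_of_continuousAt (M := M) fun x _ =>
    (((hΓ.hasDerivAt_Ffun x).const_mul ν).const_add 1).continuousAt
  refine ⟨B, hB, fun x => abs_le_mul_abs_pow_succ_of_abs_deriv_le hB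
    (fun y _ => hΓ.hasDerivAt_Ffun y) (Ffun_zero Γ) fun y => ?_⟩
  exact abs_le_mul_abs_pow_succ_of_abs_deriv_le hB (fun z _ => hΓ.hasDerivAt z) hΓ.map_zero
    (by simpa using hderiv)

lemma exists_isRestoringForce (hΓ : IsConstCurvProfile ν Γ)
    (hpos : ∀ x, |x| ≤ M → x ≠ 0 → 0 < x * Γ x) : ∃ δ C, IsRestoringForce M δ C Γ := by
  obtain ⟨δ, hδ, hle⟩ := hΓ.exists_mul_sq_le hpos
  obtain ⟨B, hB, hF⟩ := hΓ.exists_abs_Ffun_le M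
  refine ⟨δ, |ν| * B, hΓ.continuous, hδ, by positivity, fun x => ?_, hle⟩
  refine abs_le_mul_abs_pow_succ_of_abs_deriv_le (by positivity) (f' := fun y => ν * Ffun Γ y)
    (fun y _ => ((hΓ.hasDerivAt y).sub (hasDerivAt_id y)).congr_deriv (by ring))
    (by simp [hΓ.map_zero]) fun y hy => ?_
  rw [abs_mul, mul_assoc]
  exact mul_le_mul_of_nonneg_left (hF y hy) (abs_nonneg ν)

lemma abs_sub_sub_cube_le {δ C : ℝ} (hΓ : IsConstCurvProfile ν Γ)
    (hforce : IsRestoringForce M δ C Γ) (hx : |x| ≤ M) :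
    |Γ x - x - ν * x ^ 3 / 6| ≤ |ν| * C * |x| ^ 5 := by
  have hC := hforce.C_nonneg
  refine abs_le_mul_abs_pow_succ_of_abs_deriv_le (by positivity)
    (f := fun y => Γ y - y - ν * y ^ 3 / 6) (f' := fun y => ν * (Ffun Γ y - y ^ 2 / 2))
    (fun y _ => (((hΓ.hasDerivAt y).sub (hasDerivAt_id y)).sub
      (((hasDerivAt_pow 3 y).const_mul ν).div_const 6)).congr_deriv (by norm_num; ring))
    (by simp [hΓ.map_zero]) (fun y hy => ?_) hx
  rw [abs_mul, mul_assoc, Even.pow_abs (by decide)]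
  exact mul_le_mul_of_nonneg_left (hforce.abs_Ffun_sub_le hy) (abs_nonneg ν)

lemma two_add_mul_Ffun_pos (hΓ : IsConstCurvProfile ν Γ)
    (hpos : ∀ x, |x| ≤ M → x ≠ 0 → 0 < x * Γ x) (hx : |x| ≤ M) : 0 < 2 + ν * Ffun Γ x := by
  rcases eq_or_ne x 0 with rfl | hx0
  · simp [Ffun_zero]
  have hF : 0 ≤ Ffun Γ x := nonneg_of_mul_deriv_nonneg (fun y _ => hΓ.hasDerivAt_Ffun y)
    (Ffun_zero Γ) (fun y hy => by
      rcases eq_or_ne y 0 with rfl | hy0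
      · simp
      · exact (hpos y hy hy0).le) hx
  have hΓx : 0 < Γ x ^ 2 := pow_two_pos_of_ne_zero (right_ne_zero_of_mul (hpos x hx hx0).ne')
  exact pos_of_mul_pos_right (hΓ.sq_eq x ▸ hΓx) hF

lemma hasDerivAt_Vfun (hΓ : IsConstCurvProfile ν Γ)
    (hP : ∀ x, P x = Ffun Γ x / (2 + ν * Ffun Γ x)) (k b c : ℝ)
    (hx : 2 + ν * Ffun Γ x ≠ 0) :
    HasDerivAt (Vfun k b c Γ P) (Γ x * (k ^ 2 * (1 + ν * Ffun Γ x) + b * k -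
      2 * k ^ 2 * Ffun Γ x + c ^ 2 / (2 + ν * Ffun Γ x) ^ 2)) x := by
  obtain rfl : P = fun x => Ffun Γ x / (2 + ν * Ffun Γ x) := funext hP
  have hF := hΓ.hasDerivAt_Ffun x
  have hG := (((hΓ.hasDerivAt x).pow 2).const_mul (k ^ 2 / 2)).add (hF.const_mul (b * k))
    |>.sub ((hF.pow 2).const_mul (k ^ 2))
  refine (hG.add ((hF.div ((hF.const_mul ν).const_add 2) hx).const_mul (c ^ 2 / 2))).congr_deriv ?_
  push_cast
  field_simp
  ring

lemma exists_abs_deriv_Vfun_le {δ C : ℝ} (hΓ : IsConstCurvProfile ν Γ)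
    (hforce : IsRestoringForce M δ C Γ) (hP : ∀ x, P x = Ffun Γ x / (2 + ν * Ffun Γ x))
    (hpos : ∀ x, |x| ≤ M → x ≠ 0 → 0 < x * Γ x) (k b c : ℝ) :
    ∃ K, 0 ≤ K ∧ ∀ x, |x| ≤ M → |deriv (Vfun k b c Γ P) x| ≤ K * |x| := by
  have hne : ∀ x, |x| ≤ M → 2 + ν * Ffun Γ x ≠ 0 := fun x hx =>
    (hΓ.two_add_mul_Ffun_pos hpos hx).ne'
  obtain ⟨B, hB, hle⟩ := exists_abs_le_of_continuousAt (M := M)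
    (f := fun x => k ^ 2 * (1 + ν * Ffun Γ x) + b * k - 2 * k ^ 2 * Ffun Γ x +
      c ^ 2 / (2 + ν * Ffun Γ x) ^ 2) fun x hx => by
    have hF := (hΓ.hasDerivAt_Ffun x).continuousAt
    have hden := pow_ne_zero 2 (hne x hx)
    fun_prop (disch := exact hden)
  have hC := hforce.C_nonneg
  refine ⟨(1 + C * M ^ 2) * B, by positivity, fun x hx => ?_⟩
  rw [(hΓ.hasDerivAt_Vfun hP k b c (hne x hx)).deriv, abs_mul]
  exact (mul_le_mul (hforce.abs_le hx) (hle x hx) (abs_nonneg _) (by positivity)).trans_eq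
    (mul_right_comm _ _ _)

end IsConstCurvProfile

theorem stmt8_general {ν : ℝ} {Γ P : ℝ → ℝ} (hΓ : IsConstCurvProfile ν Γ)
    (hP : ∀ x, P x = Ffun Γ x / (2 + ν * Ffun Γ x)) (k b c : ℝ) {μ : ℝ} (hμ : μ < 0)
    {a₁ : ℝ} (ha₁ : 0 < a₁) {s : ℝ → ℝ}
    (hdiff : ∀ a ∈ Ici a₁, DifferentiableAt ℝ s a ∧ DifferentiableAt ℝ (deriv s) a)
    (hode : ∀ a ∈ Ici a₁,
      deriv (deriv s) a + deriv s a / a - μ * Γ (s a)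
        + deriv (Vfun k b c Γ P) (s a) / a ^ 2 = 0)
    {M : ℝ} (hM : ∀ a ∈ Ici a₁, |s a| ≤ M) (hpos : ∀ x, |x| ≤ M → x ≠ 0 → 0 < x * Γ x) :
    (∀ a ∈ Ici a₁, s a = 0) ∨
    ∃ θ₀ Einf : ℝ, ∃ Θ : ℝ → ℝ, 0 < Einf ∧
      (fun a => Θ a -
          (θ₀ - Real.sqrt |μ| * a - ν * Einf / (8 * Real.sqrt |μ|) * Real.log a))
        =O[atTop] (fun a => a⁻¹) ∧
      (fun a => s a - Real.sqrt (2 * Einf / (a * |μ|)) * Real.cos (Θ a))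
        =O[atTop] (fun a : ℝ => a ^ (-(3:ℝ) / 2)) ∧
      (fun a => deriv s a - Real.sqrt (2 * Einf / a) * Real.sin (Θ a))
        =O[atTop] (fun a : ℝ => a ^ (-(3:ℝ) / 2)) := by
  refine or_iff_not_imp_left.2 fun hne => ?_
  push Not at hne
  obtain ⟨δ, C, hforce⟩ := hΓ.exists_isRestoringForce hpos
  obtain ⟨K, hK, hV⟩ := hΓ.exists_abs_deriv_Vfun_le hforce hP hpos k b c
  have hs := isRadialSolution_of_deriv_deriv_eq hμ hK ha₁ hdiff hode hM hV
  obtain ⟨E, hE, hosc⟩ := hs.exists_isAsymptoticOscillation hforce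
    (fun x hx => hΓ.abs_sub_sub_cube_le hforce hx) hne
  obtain ⟨θ₀, hcos, hsin⟩ := hosc.exists_asymptotics
  rw [Real.sq_sqrt (abs_nonneg μ)] at hcos
  refine ⟨θ₀, E, fun a => θ₀ - accumulatedPhase √|μ| ν E a, hE, ?_, hcos, hsin⟩
  simpa [accumulatedPhase, sub_sub] using isBigO_zero _ _

/-- For `μ < 0`, `c² < −4(k² + bk)` and `ν = Γ‴(0)`: any uniformly bounded solution of
the reduced radial equation (4.24) on `[a₁,∞)` is either trivial or has the oscillatory
asymptotics `s(a) = √(2E∞/(a|μ|)) cos Θ(a) + O(a^{−3/2})`,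
`s′(a) = √(2E∞/a) sin Θ(a) + O(a^{−3/2})`, with
`Θ(a) = θ₀ − √|μ| a − (ν E∞/(8√|μ|)) log a + O(a⁻¹)`. -/
theorem stmt8 (k b c μ ν : ℝ) (Γ P : ℝ → ℝ)
    (hcase : (Γ = Real.sin ∧ P = Psph ∧ ν = -1) ∨ (Γ = Real.sinh ∧ P = Phyp ∧ ν = 1))
    (hμ : μ < 0) (hb : c ^ 2 < -4 * (k ^ 2 + b * k))
    (a₁ : ℝ) (ha₁ : 0 < a₁) (s : ℝ → ℝ)
    (hdiff : ∀ a ∈ Ici a₁, DifferentiableAt ℝ s a ∧ DifferentiableAt ℝ (deriv s) a)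
    (hode : ∀ a ∈ Ici a₁,
      deriv (deriv s) a + deriv s a / a - μ * Γ (s a)
        + deriv (Vfun k b c Γ P) (s a) / a ^ 2 = 0)
    (hbnd : ∃ M : ℝ, (∀ a ∈ Ici a₁, |s a| ≤ M) ∧ (Γ = Real.sin → M < Real.pi)) :
    (∀ a ∈ Ici a₁, s a = 0) ∨
    ∃ θ₀ Einf : ℝ, ∃ Θ : ℝ → ℝ, 0 < Einf ∧
      (fun a => Θ a -
          (θ₀ - Real.sqrt |μ| * a - ν * Einf / (8 * Real.sqrt |μ|) * Real.log a))
        =O[atTop] (fun a => a⁻¹) ∧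
      (fun a => s a - Real.sqrt (2 * Einf / (a * |μ|)) * Real.cos (Θ a))
        =O[atTop] (fun a : ℝ => a ^ (-(3:ℝ) / 2)) ∧
      (fun a => deriv s a - Real.sqrt (2 * Einf / a) * Real.sin (Θ a))
        =O[atTop] (fun a : ℝ => a ^ (-(3:ℝ) / 2)) := by
  obtain ⟨M, hM, hMπ⟩ := hbnd
  rcases hcase with ⟨rfl, rfl, rfl⟩ | ⟨rfl, rfl, rfl⟩
  · exact stmt8_general isConstCurvProfile_sin Psph_eq_div k b c hμ ha₁ hdiff hode hM
      fun x hx => mul_sin_pos (hx.trans_lt (hMπ rfl))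
  · exact stmt8_general isConstCurvProfile_sinh Phyp_eq_div k b c hμ ha₁ hdiff hode hM
      fun x _ => mul_sinh_pos
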